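/- arXiv:2101.09736 — 2 statements merged into one kernel-verified Lean document; each statement's English description precedes it below -/
import Mathlib

section
/- Let G be a simple graph on a vertex set V and let M ⊆ V be an independent set of G (no two vertices of M are adjacent) such that the subgraph of G induced on the complement V \ M is triangle-free (contains no 3-clique). If {a, b, c} and {a, b, d} are two 3-cliques (triangles) of G sharing the edge {a, b}, with c ≠ d, then c and d are not adjacent in G. -/
/-- Lemma 1 in its "adjacent triangles" form: if `M` is an independent set of a simple
graph `G`, the subgraph induced on the complement of `M` is triangle-free, and
`{a,b,c}` and `{a,b,d}` are two triangles of `G` sharing the edge `{a,b}` with `c ≠ d`,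
then `c` and `d` are not adjacent in `G`. -/
theorem not_adj_of_adjacent_triangles
    {V : Type*} [DecidableEq V] (G : SimpleGraph V) (M : Set V)
    (hM : ∀ u ∈ M, ∀ v ∈ M, ¬ G.Adj u v)
    (hTF : (G.induce (Mᶜ : Set V)).CliqueFree 3)
    (a b c d : V) (hcd : c ≠ d)
    (h₁ : G.IsNClique 3 {a, b, c})
    (h₂ : G.IsNClique 3 {a, b, d}) :
    ¬ G.Adj c d := by
  intro h
  rw [SimpleGraph.is3Clique_triple_iff] at h₁ h₂
  obtain ⟨hab, hac, hbc⟩ := h₁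
  obtain ⟨-, had, hbd⟩ := h₂
  have key : ∀ x y z : V, G.Adj x y → G.Adj x z → G.Adj y z →
      x ∉ M → y ∉ M → z ∉ M → False := by
    intro x y z hxy hxz hyz hx hy hz
    classical
    refine hTF {⟨x, hx⟩, ⟨y, hy⟩, ⟨z, hz⟩} ?_
    rw [SimpleGraph.is3Clique_triple_iff]
    exact ⟨hxy, hxz, hyz⟩
  by_cases ha : a ∈ M
  · exact key b c d hbc hbd h (fun hb => hM a ha b hb hab)
      (fun hc => hM a ha c hc hac) (fun hd => hM a ha d hd had)
  by_cases hb : b ∈ M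
  · exact key a c d hac had h ha
      (fun hc => hM b hb c hc hbc) (fun hd => hM b hb d hd hbd)
  by_cases hc : c ∈ M
  · exact key a b d hab had hbd ha hb (fun hd => hM c hc d hd h)
  · exact key a b c hab hac hbc ha hb hc
end

section
/- Let A and B be finite subsets of ℝ². Assume every point of A has second coordinate equal to 0 and first coordinate at most 1 (A lies on the x-axis), and every point of B has nonzero second coordinate and first coordinate at most 1. Then there exists ε > 0 and L ∈ ℝ such that for every l ≥ L the following holds: setting o = (l, 0), r = (2, ε), s = (2, −ε), and W = { o + α·(r − o) + β·(s − o) : α ≥ 0, β ≥ 0 } (the wedge with apex o spanned by the rays from o through r and through s), every point a ∈ A can be written as o + α·(r − o) + β·(s − o) with α > 0 and β > 0 (so A lies in the interior of the wedge W), and no point of B belongs to W. -/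
theorem exists_eps (B : Finset (ℝ × ℝ)) (hB : ∀ p ∈ B, p.2 ≠ 0 ∧ p.1 ≤ 1) :
    ∃ ε > (0 : ℝ), ∀ b ∈ B, ε * (3 - b.1) < |b.2| := by
  have h : ∀ᶠ ε in nhdsWithin (0 : ℝ) (Set.Ioi 0), ∀ b ∈ B, ε * (3 - b.1) < |b.2| := by
    rw [Filter.eventually_all_finset]
    intro b hb
    have hc : Continuous (fun ε : ℝ => ε * (3 - b.1)) := by fun_prop
    have ht := hc.tendsto 0
    simp only [zero_mul] at ht
    exact (ht.mono_left nhdsWithin_le_nhds).eventually_lt_const (abs_pos.mpr (hB b hb).1)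
  obtain ⟨ε, h1, h2⟩ := (h.and self_mem_nhdsWithin).exists
  exact ⟨ε, h2, h1⟩

/-- Separation property used in Theorem 4: if all points of `A` lie on the x-axis with
first coordinate at most `1`, and all points of `B` have nonzero second coordinate and
first coordinate at most `1`, then there are `ε > 0` and `L` such that for every
`l ≥ L`, the wedge with apex `o = (l, 0)` spanned by the rays from `o` through
`r = (2, ε)` and `s = (2, -ε)` contains every point of `A` in its interior and
contains no point of `B`. -/
theorem wedge_separation
    (A B : Finset (ℝ × ℝ))
    (hA : ∀ p ∈ A, p.2 = 0 ∧ p.1 ≤ 1)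
    (hB : ∀ p ∈ B, p.2 ≠ 0 ∧ p.1 ≤ 1) :
    ∃ ε > (0 : ℝ), ∃ L : ℝ, ∀ l ≥ L,
      (∀ a ∈ A, ∃ α > (0 : ℝ), ∃ β > (0 : ℝ),
        a = ((l, 0) : ℝ × ℝ) + α • (((2, ε) : ℝ × ℝ) - (l, 0))
              + β • (((2, -ε) : ℝ × ℝ) - (l, 0))) ∧
      (∀ b ∈ B, ¬ ∃ α ≥ (0 : ℝ), ∃ β ≥ (0 : ℝ),
        b = ((l, 0) : ℝ × ℝ) + α • (((2, ε) : ℝ × ℝ) - (l, 0))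
              + β • (((2, -ε) : ℝ × ℝ) - (l, 0))) := by
  obtain ⟨ε, hε, hs⟩ := exists_eps B hB
  refine ⟨ε, hε, 3, fun l hl => ⟨?_, ?_⟩⟩
  · rintro ⟨x, y⟩ ha
    obtain ⟨hy, hx⟩ := hA _ ha
    simp only at hy hx
    have h2 : 0 < l - 2 := by linarith
    have hpos : 0 < (l - x) / (2 * (l - 2)) := div_pos (by linarith) (by linarith)
    refine ⟨_, hpos, _, hpos, ?_⟩
    ext
    · simp
      field_simp
      ring
    · simp [hy]
  · rintro ⟨x, y⟩ hb ⟨α, hα, β, hβ, h⟩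
    have hs' := hs _ hb
    obtain ⟨hy, hx⟩ := hB _ hb
    have e1 := congrArg Prod.fst h
    have e2 := congrArg Prod.snd h
    simp at e1 e2 hs' hx
    have hsum : α + β ≤ 3 - x := by
      by_contra hc
      push Not at hc
      nlinarith [mul_nonneg (by linarith : 0 ≤ l - 3) (by linarith : 0 ≤ 2 - x)]
    have hle : |y| ≤ ε * (α + β) := by
      rw [abs_le]
      constructor <;> nlinarith [mul_nonneg hα hε.le, mul_nonneg hβ hε.le]
    have := mul_le_mul_of_nonneg_left hsum hε.le
    linarith
end
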